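/- Let m>0, let k denote the continuous extension to the closed upper half-plane of the branch of √(z²−m²) with Im k(z)>0 for Im z>0, and let ζ∈C_c^∞(ℝ). Then for every fixed x∈ℝ and every ε≥0, the function t ↦ (1/2π)∫_ℝ e^{ik(ω+iε)|x|} ζ(ω) e^{−iωt} dω belongs to L¹(ℝ;ℂ) (as a function of t∈ℝ). -/

import Mathlib

open MeasureTheory Filter
open scoped ENNReal Topology

noncomputable section

open scoped Classical in
/-- The continuous extension to the closed upper half-plane of the branch
`k(z) = √(z²−m²)` with `Im k(z) > 0` for `Im z > 0`: in the open upper half-plane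
`k(z) = i(m²−z²)^{1/2}` (principal power), and on the real axis
`k(ω) = √(ω²−m²)` for `ω ≥ m`, `k(ω) = −√(ω²−m²)` for `ω ≤ −m`,
and `k(ω) = i√(m²−ω²)` for `|ω| ≤ m`. -/
def kCl (m : ℝ) (w : ℂ) : ℂ :=
  if 0 < w.im then Complex.I * (((m:ℂ)^2 - w^2) ^ ((1:ℂ)/2))
  else if m ≤ w.re then ((Real.sqrt (w.re^2 - m^2) : ℝ) : ℂ)
  else if w.re ≤ -m then -((Real.sqrt (w.re^2 - m^2) : ℝ) : ℂ)
  else Complex.I * ((Real.sqrt (m^2 - w.re^2) : ℝ) : ℂ)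

/-!
A compactly supported function `f` that is `r`-Hölder and of bounded variation has an integrable
Fourier transform (Zygmund). Indeed `‖f(· + h) - f‖₂² ≤ ‖f(· + h) - f‖_∞ ‖f(· + h) - f‖₁`
is `O(h ^ (1 + r))`, which by Plancherel bounds `∫ |e^{2πihξ} - 1|² |𝓕 f ξ|² dξ`. Integrating
against `h ^ (-1 - p) dh` with `1 < p < 1 + r` gives `∫ (1 + |ξ|) ^ p |𝓕 f ξ|² dξ < ∞`, and AM-GM
concludes.

The symbol is of this kind because `k(z) = √(z - m) √(z + m)` on the closed upper half-plane, where
`√` is `1/2`-Hölder with values in the first quadrant, and along horizontal lines `Re √` increases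
while `Im √` decreases.
-/

open Set
open scoped FourierTransform NNReal

section Translation

variable {V E : Type*} [NormedAddCommGroup V] [InnerProductSpace ℝ V] [MeasurableSpace V]
  [BorelSpace V] [FiniteDimensional ℝ V] [NormedAddCommGroup E] [NormedSpace ℂ E] {f : V → E}

theorem continuous_fourier_of_integrable (hf : Integrable f) : Continuous (𝓕 f) :=
  VectorFourier.fourierIntegral_continuous Real.continuous_fourierChar continuous_inner hf

theorem fourier_translate_sub (hf : Integrable f) (h ξ : V) :
    𝓕 (fun x => f (x + h) - f x) ξ = ((𝐞 (inner ℝ h ξ) : ℂ) - 1) • 𝓕 f ξ := by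
  have fourier_translate : 𝓕 (fun x => f (x + h)) ξ = 𝐞 (inner ℝ h ξ) • 𝓕 f ξ :=
    congrFun (VectorFourier.fourierIntegral_comp_add_right 𝐞 volume (innerₗ V) f h) ξ
  have integrable_char_smul {g : V → E} (hg : Integrable g) :
      Integrable fun x => 𝐞 (-inner ℝ x ξ) • g x :=
    (Real.fourierIntegral_convergent_iff ξ).2 hg
  rw [sub_smul, one_smul, ← Circle.smul_def, ← fourier_translate]
  simp only [Real.fourier_eq, smul_sub]
  exact integral_sub (integrable_char_smul (hf.comp_add_right h)) (integrable_char_smul hf)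

end Translation

section Plancherel

theorem lintegral_enorm_sq_eq_eLpNorm_sq {α E : Type*} [MeasurableSpace α] {μ : Measure α}
    [NormedAddCommGroup E] (f : α → E) : ∫⁻ x, ‖f x‖ₑ ^ 2 ∂μ = eLpNorm f 2 μ ^ 2 := by
  simpa using (eLpNorm_nnreal_pow_eq_lintegral (f := f) (p := 2) (μ := μ) two_ne_zero).symm

variable {V E : Type*} [NormedAddCommGroup V] [InnerProductSpace ℝ V] [FiniteDimensional ℝ V]
  [MeasurableSpace V] [BorelSpace V] [NormedAddCommGroup E] [InnerProductSpace ℂ E]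
  [CompleteSpace E] {f : V → E}

theorem coeFn_fourier_toLp_two_ae_eq (hf : Integrable f) (hf2 : MemLp f 2) :
    (𝓕 (hf2.toLp f) : Lp E 2) =ᵐ[volume] 𝓕 f := by
  refine ae_eq_of_integral_contDiff_smul_eq
    ((Lp.memLp _).locallyIntegrable one_le_two)
    (continuous_fourier_of_integrable hf).locallyIntegrable fun g hg hgc => ?_
  let G : SchwartzMap V ℂ := (hgc.comp_left Complex.ofReal_zero).toSchwartzMap
    (Complex.ofRealCLM.contDiff.comp hg)
  have hG (v : V) : G v = (g v : ℂ) := rfl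
  calc ∫ v, g v • (𝓕 (hf2.toLp f) : Lp E 2 (volume : Measure V)) v
      = Lp.toTemperedDistribution (𝓕 (hf2.toLp f)) G := by
        simp only [Lp.toTemperedDistribution_apply, hG, Complex.coe_smul]
    _ = Lp.toTemperedDistribution (hf2.toLp f) (𝓕 G) := by
        rw [← Lp.fourier_toTemperedDistribution_eq, TemperedDistribution.fourier_apply]
    _ = ∫ v, 𝓕 G v • f v := by
        rw [Lp.toTemperedDistribution_apply]
        refine integral_congr_ae ?_
        filter_upwards [hf2.coeFn_toLp] with v hv
        rw [hv]
    _ = ∫ v, G v • 𝓕 f v := by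
        simpa only [flip_innerₗ] using! VectorFourier.integral_fourierIntegral_smul_eq_flip
          (L := innerₗ V) Real.continuous_fourierChar continuous_inner G.integrable hf
    _ = ∫ v, g v • 𝓕 f v := by simp only [hG, Complex.coe_smul]

theorem lintegral_enorm_fourier_sq (hf : Integrable f) (hf2 : MemLp f 2) :
    ∫⁻ ξ, ‖𝓕 f ξ‖ₑ ^ 2 = ∫⁻ x, ‖f x‖ₑ ^ 2 := by
  have eLpNorm_fourier : eLpNorm (𝓕 f) 2 = eLpNorm f 2 := by
    rw [← eLpNorm_congr_ae (coeFn_fourier_toLp_two_ae_eq hf hf2), ← Lp.enorm_def,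
      ← Lp.enorm_toLp hf2, ← ofReal_norm, ← ofReal_norm, Lp.norm_fourier_eq]
  rw [lintegral_enorm_sq_eq_eLpNorm_sq, lintegral_enorm_sq_eq_eLpNorm_sq, eLpNorm_fourier]

theorem lintegral_enorm_fourierChar_sub_one_sq_mul_fourier_sq
    (hf : Integrable f) (hf2 : MemLp f 2) (h : V) :
    ∫⁻ ξ, ‖(𝐞 (inner ℝ h ξ) : ℂ) - 1‖ₑ ^ 2 * ‖𝓕 f ξ‖ₑ ^ 2 = ∫⁻ x, ‖f (x + h) - f x‖ₑ ^ 2 := by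
  have hf2_translate : MemLp (fun x => f (x + h)) 2 :=
    hf2.comp_measurePreserving (measurePreserving_add_right volume h)
  calc ∫⁻ ξ, ‖(𝐞 (inner ℝ h ξ) : ℂ) - 1‖ₑ ^ 2 * ‖𝓕 f ξ‖ₑ ^ 2
      = ∫⁻ ξ, ‖𝓕 (fun x => f (x + h) - f x) ξ‖ₑ ^ 2 := by
        simp only [fourier_translate_sub hf, enorm_smul, mul_pow]
    _ = ∫⁻ x, ‖f (x + h) - f x‖ₑ ^ 2 :=
        lintegral_enorm_fourier_sq ((hf.comp_add_right h).sub hf) (hf2_translate.sub hf2)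

end Plancherel

section Bernstein

theorem four_mul_abs_le_norm_fourierChar_sub_one {t : ℝ} (ht : |t| ≤ 1 / 2) :
    4 * |t| ≤ ‖(𝐞 t : ℂ) - 1‖ := by
  have jordan : 2 / Real.pi * (Real.pi * |t|) ≤ Real.sin (Real.pi * |t|) :=
    Real.mul_le_sin (by positivity) (by nlinarith [Real.pi_pos])
  have abs_sin : |Real.sin (Real.pi * t)| = |Real.sin (Real.pi * |t|)| := by
    rcases abs_choice t with h | h <;> simp [h]
  calc 4 * |t| = 2 * (2 / Real.pi * (Real.pi * |t|)) := by field_simp; ring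
    _ ≤ 2 * |Real.sin (Real.pi * t)| := by
        rw [abs_sin]
        gcongr
        exact jordan.trans (le_abs_self _)
    _ = ‖(𝐞 t : ℂ) - 1‖ := by
        rw [Real.fourierChar_apply, mul_comm _ Complex.I, Complex.norm_exp_I_mul_ofReal_sub_one]
        simp [mul_div_right_comm]

theorem rpow_le_two_mul_rpow_mul_sub {p x : ℝ} (hp : 1 ≤ p) (hx : 0 < x) :
    x ^ p ≤ (2 * x) ^ (1 + p) * (1 / (2 * x) - 1 / (4 * x)) := by
  have two_le : (2 : ℝ) ≤ 2 ^ p := by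
    simpa using Real.rpow_le_rpow_of_exponent_le one_le_two hp
  calc x ^ p ≤ 2 ^ p / 2 * x ^ p := le_mul_of_one_le_left (by positivity) (by linarith)
    _ = (2 * x) ^ (1 + p) * (1 / (2 * x) - 1 / (4 * x)) := by
        rw [Real.rpow_add (by positivity), Real.rpow_one, Real.mul_rpow zero_le_two hx.le]
        field_simp
        norm_num

theorem rpow_abs_le_lintegral_fourierChar_sub_one {p ξ : ℝ} (hp : 1 ≤ p) (hξ : 1 ≤ |ξ|) :
    ENNReal.ofReal (|ξ| ^ p) ≤ ∫⁻ h in Ioc (0 : ℝ) 1,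
      ENNReal.ofReal (h ^ (-1 - p)) * ‖(𝐞 (h * ξ) : ℂ) - 1‖ₑ ^ 2 := by
  have hξ0 : 0 < |ξ| := one_pos.trans_le hξ
  set J := Ioc (1 / (4 * |ξ|)) (1 / (2 * |ξ|))
  have hJ : J ⊆ Ioc 0 1 := Ioc_subset_Ioc (by positivity)
    ((div_le_one (by positivity)).2 (by linarith))
  have weight_le {h : ℝ} (hh : h ∈ J) : (2 * |ξ|) ^ (1 + p) ≤ h ^ (-1 - p) := by
    have h_pos : 0 < h := (hJ hh).1
    rw [show -1 - p = -(1 + p) by ring, Real.rpow_neg h_pos.le, ← Real.inv_rpow h_pos.le]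
    gcongr
    rw [le_inv_comm₀ (by positivity) h_pos, ← one_div]
    exact hh.2
  have one_le_char {h : ℝ} (hh : h ∈ J) : 1 ≤ ‖(𝐞 (h * ξ) : ℂ) - 1‖ := by
    have abs_mul_eq : |h * ξ| = h * |ξ| := by rw [abs_mul, abs_of_pos (hJ hh).1]
    have lower := (div_lt_iff₀ (by positivity)).1 hh.1
    have upper := (le_div_iff₀ (by positivity)).1 hh.2
    linarith [four_mul_abs_le_norm_fourierChar_sub_one (t := h * ξ) (by linarith)]
  calc ENNReal.ofReal (|ξ| ^ p)
      ≤ ENNReal.ofReal ((2 * |ξ|) ^ (1 + p) * (1 / (2 * |ξ|) - 1 / (4 * |ξ|))) := by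
        gcongr
        exact rpow_le_two_mul_rpow_mul_sub hp hξ0
    _ = ∫⁻ _ in J, ENNReal.ofReal ((2 * |ξ|) ^ (1 + p)) := by
        rw [setLIntegral_const, Real.volume_Ioc, ENNReal.ofReal_mul (by positivity)]
    _ ≤ ∫⁻ h in J, ENNReal.ofReal (h ^ (-1 - p)) * ‖(𝐞 (h * ξ) : ℂ) - 1‖ₑ ^ 2 := by
        refine setLIntegral_mono' measurableSet_Ioc fun h hh => ?_
        have one_le : (1 : ℝ≥0∞) ≤ ‖(𝐞 (h * ξ) : ℂ) - 1‖ₑ := by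
          rw [← ofReal_norm, ENNReal.one_le_ofReal]
          exact one_le_char hh
        exact (ENNReal.ofReal_le_ofReal (weight_le hh)).trans
          (le_mul_of_one_le_right' (one_le_pow₀ one_le))
    _ ≤ _ := lintegral_mono_set hJ

theorem one_add_abs_rpow_le_lintegral_fourierChar_sub_one {p : ℝ} (hp : 1 ≤ p) (ξ : ℝ) :
    ENNReal.ofReal ((1 + |ξ|) ^ p) ≤ ENNReal.ofReal (2 ^ p) * (1 + ∫⁻ h in Ioc (0 : ℝ) 1,
      ENNReal.ofReal (h ^ (-1 - p)) * ‖(𝐞 (h * ξ) : ℂ) - 1‖ₑ ^ 2) := by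
  rcases le_total |ξ| 1 with hξ | hξ
  · calc ENNReal.ofReal ((1 + |ξ|) ^ p) ≤ ENNReal.ofReal (2 ^ p) * 1 := by
          rw [mul_one]
          gcongr
          linarith
      _ ≤ _ := by gcongr; exact le_self_add
  · calc ENNReal.ofReal ((1 + |ξ|) ^ p) ≤ ENNReal.ofReal (2 ^ p) * ENNReal.ofReal (|ξ| ^ p) := by
          rw [← ENNReal.ofReal_mul (by positivity), ← Real.mul_rpow zero_le_two (abs_nonneg ξ)]
          gcongr
          linarith
      _ ≤ _ := by
          gcongr
          exact (rpow_abs_le_lintegral_fourierChar_sub_one hp hξ).trans le_add_self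

theorem setLIntegral_Ioc_rpow_lt_top {s : ℝ} (hs : -1 < s) :
    ∫⁻ h in Ioc (0 : ℝ) 1, ENNReal.ofReal (h ^ s) < ∞ :=
  ((intervalIntegrable_iff_integrableOn_Ioc_of_le zero_le_one).1
    (intervalIntegral.intervalIntegrable_rpow' hs)).lintegral_lt_top

variable {E : Type*} [NormedAddCommGroup E]

-- AM-GM: `‖g‖ ≤ (1 + ‖ξ‖)⁻ᵖ + (1 + ‖ξ‖)ᵖ ‖g‖²`.
theorem integrable_of_lintegral_one_add_norm_rpow_mul_enorm_sq {V : Type*}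
    [NormedAddCommGroup V] [NormedSpace ℝ V] [FiniteDimensional ℝ V] [MeasurableSpace V]
    [BorelSpace V] {μ : Measure V} [μ.IsAddHaarMeasure] {g : V → E}
    (hg : AEStronglyMeasurable g μ) {p : ℝ} (hp : Module.finrank ℝ V < p)
    (h : ∫⁻ ξ, ENNReal.ofReal ((1 + ‖ξ‖) ^ p) * ‖g ξ‖ₑ ^ 2 ∂μ < ∞) : Integrable g μ := by
  have am_gm (ξ : V) :
      ‖g ξ‖ₑ ≤ ENNReal.ofReal ((1 + ‖ξ‖) ^ (-p)) + ENNReal.ofReal ((1 + ‖ξ‖) ^ p) * ‖g ξ‖ₑ ^ 2 := by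
    have weight_pos : 0 < (1 + ‖ξ‖) ^ p := by positivity
    have : ‖g ξ‖ ≤ (1 + ‖ξ‖) ^ (-p) + (1 + ‖ξ‖) ^ p * ‖g ξ‖ ^ 2 := by
      rw [Real.rpow_neg (by positivity)]
      field_simp
      nlinarith [sq_nonneg ((1 + ‖ξ‖) ^ p * ‖g ξ‖ - 1)]
    rw [← ofReal_norm, ← ENNReal.ofReal_pow (norm_nonneg _), ← ENNReal.ofReal_mul weight_pos.le,
      ← ENNReal.ofReal_add (by positivity) (by positivity)]
    exact ENNReal.ofReal_le_ofReal this
  refine ⟨hg, (lintegral_mono am_gm).trans_lt ?_⟩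
  rw [lintegral_add_left (by fun_prop)]
  exact ENNReal.add_lt_top.2 ⟨finite_integral_one_add_norm hp, h⟩

variable [InnerProductSpace ℂ E] [CompleteSpace E] {f : ℝ → E} {C : ℝ≥0∞} {p q : ℝ}

theorem lintegral_fourierChar_sub_one_mul_fourier_sq_lt_top (hf : Integrable f) (hf2 : MemLp f 2)
    (hC : C ≠ ∞) (hpq : p < q)
    (hfC : ∀ h ∈ Ioc (0 : ℝ) 1, ∫⁻ x, ‖f (x + h) - f x‖ₑ ^ 2 ≤ C * ENNReal.ofReal (h ^ q)) :
    ∫⁻ ξ, (∫⁻ h in Ioc (0 : ℝ) 1,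
      ENNReal.ofReal (h ^ (-1 - p)) * ‖(𝐞 (h * ξ) : ℂ) - 1‖ₑ ^ 2) * ‖𝓕 f ξ‖ₑ ^ 2 < ∞ := by
  have hcont := continuous_fourier_of_integrable hf
  calc ∫⁻ ξ, (∫⁻ h in Ioc (0 : ℝ) 1,
        ENNReal.ofReal (h ^ (-1 - p)) * ‖(𝐞 (h * ξ) : ℂ) - 1‖ₑ ^ 2) * ‖𝓕 f ξ‖ₑ ^ 2
      = ∫⁻ ξ, ∫⁻ h in Ioc (0 : ℝ) 1,
          ENNReal.ofReal (h ^ (-1 - p)) * (‖(𝐞 (h * ξ) : ℂ) - 1‖ₑ ^ 2 * ‖𝓕 f ξ‖ₑ ^ 2) := by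
        refine lintegral_congr fun ξ => ?_
        rw [← lintegral_mul_const _ (by fun_prop)]
        simp only [mul_assoc]
    _ = ∫⁻ h in Ioc (0 : ℝ) 1, ∫⁻ ξ,
          ENNReal.ofReal (h ^ (-1 - p)) * (‖(𝐞 (h * ξ) : ℂ) - 1‖ₑ ^ 2 * ‖𝓕 f ξ‖ₑ ^ 2) :=
        lintegral_lintegral_swap (by fun_prop)
    _ = ∫⁻ h in Ioc (0 : ℝ) 1,
          ENNReal.ofReal (h ^ (-1 - p)) * ∫⁻ x, ‖f (x + h) - f x‖ₑ ^ 2 := by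
        refine lintegral_congr fun h => ?_
        rw [lintegral_const_mul' _ _ ENNReal.ofReal_ne_top,
          ← lintegral_enorm_fourierChar_sub_one_sq_mul_fourier_sq hf hf2]
        simp only [RCLike.inner_apply, conj_trivial, mul_comm]
    _ ≤ ∫⁻ h in Ioc (0 : ℝ) 1, C * ENNReal.ofReal (h ^ (q - p - 1)) := by
        refine setLIntegral_mono' measurableSet_Ioc fun h hh => ?_
        calc ENNReal.ofReal (h ^ (-1 - p)) * ∫⁻ x, ‖f (x + h) - f x‖ₑ ^ 2
            ≤ ENNReal.ofReal (h ^ (-1 - p)) * (C * ENNReal.ofReal (h ^ q)) := by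
              gcongr
              exact hfC h hh
          _ = C * ENNReal.ofReal (h ^ (q - p - 1)) := by
              rw [mul_left_comm, ← ENNReal.ofReal_mul (Real.rpow_nonneg hh.1.le _),
                ← Real.rpow_add hh.1]
              ring_nf
    _ = C * ∫⁻ h in Ioc (0 : ℝ) 1, ENNReal.ofReal (h ^ (q - p - 1)) :=
        lintegral_const_mul' _ _ hC
    _ < ∞ := ENNReal.mul_lt_top hC.lt_top (setLIntegral_Ioc_rpow_lt_top (by linarith))

theorem integrable_fourier_of_lintegral_translate_sub_sq_le (hf : Integrable f) (hf2 : MemLp f 2)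
    (hC : C ≠ ∞) (hq : 1 < q)
    (hfC : ∀ h ∈ Ioc (0 : ℝ) 1, ∫⁻ x, ‖f (x + h) - f x‖ₑ ^ 2 ≤ C * ENNReal.ofReal (h ^ q)) :
    Integrable (𝓕 f) := by
  obtain ⟨p, hp1, hpq⟩ := exists_between hq
  have hcont := continuous_fourier_of_integrable hf
  have fourier_sq_lt_top : ∫⁻ ξ, ‖𝓕 f ξ‖ₑ ^ 2 < ∞ := by
    rw [lintegral_enorm_fourier_sq hf hf2, lintegral_enorm_sq_eq_eLpNorm_sq]
    exact ENNReal.pow_lt_top hf2.eLpNorm_lt_top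
  refine integrable_of_lintegral_one_add_norm_rpow_mul_enorm_sq (p := p)
    hcont.aestronglyMeasurable (by simpa using hp1) ?_
  set W : ℝ → ℝ≥0∞ := fun ξ =>
    ∫⁻ h in Ioc (0 : ℝ) 1, ENNReal.ofReal (h ^ (-1 - p)) * ‖(𝐞 (h * ξ) : ℂ) - 1‖ₑ ^ 2
  calc ∫⁻ ξ, ENNReal.ofReal ((1 + ‖ξ‖) ^ p) * ‖𝓕 f ξ‖ₑ ^ 2
      ≤ ∫⁻ ξ, ENNReal.ofReal (2 ^ p) * (‖𝓕 f ξ‖ₑ ^ 2 + W ξ * ‖𝓕 f ξ‖ₑ ^ 2) := by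
        refine lintegral_mono fun ξ => ?_
        rw [← one_add_mul, ← mul_assoc]
        gcongr
        exact one_add_abs_rpow_le_lintegral_fourierChar_sub_one hp1.le ξ
    _ = ENNReal.ofReal (2 ^ p) * ((∫⁻ ξ, ‖𝓕 f ξ‖ₑ ^ 2) + ∫⁻ ξ, W ξ * ‖𝓕 f ξ‖ₑ ^ 2) := by
        rw [lintegral_const_mul' _ _ ENNReal.ofReal_ne_top,
          lintegral_add_left (hcont.enorm.measurable.pow_const 2)]
    _ < ∞ := ENNReal.mul_lt_top ENNReal.ofReal_lt_top (ENNReal.add_lt_top.2 ⟨fourier_sq_lt_top,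
        lintegral_fourierChar_sub_one_mul_fourier_sq_lt_top hf hf2 hC hpq hfC⟩)

end Bernstein

section BoundedVariation

theorem setLIntegral_Ioc_add_natCast_mul {g : ℝ → ℝ≥0∞} (hg : Measurable g) {h : ℝ} (hh : 0 ≤ h)
    (a : ℝ) (n : ℕ) :
    ∫⁻ x in Ioc a (a + n * h), g x =
      ∫⁻ y in Ioc a (a + h), ∑ i ∈ Finset.range n, g (y + i * h) := by
  induction n with
  | zero => simp
  | succ n ih =>
    have last_block : ∫⁻ x in Ioc (a + n * h) (a + n * h + h), g x =
        ∫⁻ y in Ioc a (a + h), g (y + n * h) := by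
      rw [← (measurePreserving_add_right volume (n * h)).setLIntegral_comp_preimage
        measurableSet_Ioc hg, preimage_add_const_Ioc]
      ring_nf
    rw [show a + (n + 1 : ℕ) * h = a + n * h + h by push_cast; ring,
      ← Ioc_union_Ioc_eq_Ioc (b := a + n * h) (by simp only [le_add_iff_nonneg_right]; positivity)
        (by simpa using hh),
      lintegral_union measurableSet_Ioc (Ioc_disjoint_Ioc_of_le le_rfl), ih, last_block,
      ← lintegral_add_right _ (by fun_prop)]
    simp only [Finset.sum_range_succ]

theorem lintegral_edist_translate_le_mul_eVariationOn {E : Type*} [PseudoEMetricSpace E] {f : ℝ → E}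
    (hf : StronglyMeasurable f) {h : ℝ} (hh : 0 < h) :
    ∫⁻ x, edist (f (x + h)) (f x) ≤ ENNReal.ofReal h * eVariationOn f univ := by
  have hg : Measurable fun x => edist (f (x + h)) (f x) :=
    ((hf.comp_measurable (measurable_add_const h)).edist hf).measurable
  have sum_le (y : ℝ) (n : ℕ) :
      ∑ i ∈ Finset.range n, edist (f (y + i * h + h)) (f (y + i * h)) ≤ eVariationOn f univ := by
    have monotone_nodes : Monotone fun i : ℕ => y + i * h := fun i j hij => by
      dsimp only
      gcongr
    simpa [add_mul, add_assoc] using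
      eVariationOn.sum_le (f := f) (n := n) monotone_nodes fun _ => mem_univ _
  have interval_le (a : ℝ) (n : ℕ) :
      ∫⁻ x in Ioc a (a + n * h), edist (f (x + h)) (f x) ≤
        ENNReal.ofReal h * eVariationOn f univ := by
    rw [setLIntegral_Ioc_add_natCast_mul hg hh.le]
    calc _ ≤ ∫⁻ _ in Ioc a (a + h), eVariationOn f univ := lintegral_mono fun y => sum_le y n
      _ = ENNReal.ofReal h * eVariationOn f univ := by simp [mul_comm]
  have hcover : AECover volume atTop fun n : ℕ => Ioc (-(n * h)) (n * h) := by
    have tendsto_nodes : Tendsto (fun n : ℕ => n * h) atTop atTop :=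
      tendsto_natCast_atTop_atTop.atTop_mul_const hh
    exact aecover_Ioc (tendsto_neg_atTop_atBot.comp tendsto_nodes) tendsto_nodes
  refine le_of_tendsto'
    (hcover.lintegral_tendsto_of_countably_generated hg.aemeasurable) fun n => ?_
  simpa [two_mul, add_mul] using interval_le (-(n * h)) (2 * n)

theorem boundedVariationOn_prodMk {α E F : Type*} [LinearOrder α] [PseudoEMetricSpace E]
    [PseudoEMetricSpace F] {f : α → E} {g : α → F} {s : Set α} (hf : BoundedVariationOn f s)
    (hg : BoundedVariationOn g s) : BoundedVariationOn (fun x => (f x, g x)) s := by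
  have eVariationOn_le :
      eVariationOn (fun x => (f x, g x)) s ≤ eVariationOn f s + eVariationOn g s := by
    refine iSup_le fun ⟨n, u, hu, hus⟩ => ?_
    calc ∑ i ∈ Finset.range n, edist (f (u (i + 1)), g (u (i + 1))) (f (u i), g (u i))
        ≤ ∑ i ∈ Finset.range n,
            (edist (f (u (i + 1))) (f (u i)) + edist (g (u (i + 1))) (g (u i))) := by
          gcongr with i
          exact max_le le_self_add le_add_self
      _ ≤ eVariationOn f s + eVariationOn g s := by
          rw [Finset.sum_add_distrib]
          exact add_le_add (eVariationOn.sum_le hu hus) (eVariationOn.sum_le hu hus)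
  exact ne_top_of_le_ne_top (ENNReal.add_ne_top.2 ⟨hf, hg⟩) eVariationOn_le

theorem boundedVariationOn_of_re_of_im {α : Type*} [LinearOrder α] {f : α → ℂ} {s : Set α}
    (hre : BoundedVariationOn (fun x => (f x).re) s)
    (him : BoundedVariationOn (fun x => (f x).im) s) : BoundedVariationOn f s := by
  simpa [Function.comp_def] using! Complex.equivRealProdCLM.symm.lipschitz.comp_boundedVariationOn
    (boundedVariationOn_prodMk hre him)

end BoundedVariation

section Zygmund

variable {E F : Type*}

theorem comp_projIcc_eq_self {α : Type*} [LinearOrder α] [Zero E] {f : α → E}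
    {a b : α} (hab : a ≤ b) (hsupp : Function.support f ⊆ Ioo a b) :
    (fun x => f (projIcc a b hab x)) = f := by
  have eq_zero {x : α} (hx : x ∉ Ioo a b) : f x = 0 :=
    Function.notMem_support.1 fun h => hx (hsupp h)
  funext x
  rcases le_or_gt x a with hxa | hax
  · rw [projIcc_of_le_left hab hxa, eq_zero left_notMem_Ioo, eq_zero fun h => hxa.not_gt h.1]
  rcases le_or_gt b x with hbx | hxb
  · rw [projIcc_of_right_le hab hbx, eq_zero right_notMem_Ioo, eq_zero fun h => hbx.not_gt h.2]
  · rw [projIcc_of_mem hab ⟨hax.le, hxb.le⟩]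

/-- The functions that are both `r`-Hölder and of bounded variation on `s`. By Zygmund's theorem
the Fourier transform of such a function is integrable as soon as it has compact support; the
Hölder constant is left existential because only the exponent matters. -/
def HolderBVOn [PseudoEMetricSpace E] (r : ℝ≥0) (f : ℝ → E) (s : Set ℝ) : Prop :=
  (∃ C, HolderOnWith C r f s) ∧ BoundedVariationOn f s

namespace HolderBVOn

theorem prodMk [PseudoEMetricSpace E] [PseudoEMetricSpace F] {r : ℝ≥0} {f : ℝ → E} {g : ℝ → F}
    {s : Set ℝ} : HolderBVOn r f s → HolderBVOn r g s → HolderBVOn r (fun x => (f x, g x)) s := by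
  rintro ⟨⟨C, hfC⟩, hfBV⟩ ⟨⟨D, hgD⟩, hgBV⟩
  refine ⟨⟨max C D, fun x hx y hy => max_le ?_ ?_⟩, boundedVariationOn_prodMk hfBV hgBV⟩
  · exact (hfC.mono_const (le_max_left C D)).edist_le hx hy
  · exact (hgD.mono_const (le_max_right C D)).edist_le hx hy

theorem contDiff_comp [NormedAddCommGroup E] [NormedSpace ℝ E] [NormedAddCommGroup F]
    [NormedSpace ℝ F] {Φ : E → F} (hΦ : ContDiff ℝ 1 Φ) {r : ℝ≥0} (hr : 0 < r) {f : ℝ → E}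
    {s : Set ℝ} (hs : IsCompact s) : HolderBVOn r f s → HolderBVOn r (fun x => Φ (f x)) s := by
  rintro ⟨⟨C, hfC⟩, hfBV⟩
  obtain ⟨K, hK⟩ := hΦ.locallyLipschitz.locallyLipschitzOn.exists_lipschitzOnWith_of_compact
    (hs.image_of_continuousOn (hfC.continuousOn hr))
  have hmaps : MapsTo f s (f '' s) := mapsTo_image f s
  exact ⟨⟨K * C ^ (1 : ℝ), by simpa using! hK.holderOnWith.comp hfC hmaps⟩,
    hK.comp_boundedVariationOn hmaps hfBV⟩

theorem of_le [PseudoEMetricSpace E] {r t : ℝ≥0} {f : ℝ → E} {a b : ℝ} (htr : t ≤ r) :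
    HolderBVOn r f (Icc a b) → HolderBVOn t f (Icc a b) := by
  rintro ⟨⟨C, hfC⟩, hfBV⟩
  refine ⟨⟨_, hfC.of_le (D := (b - a).toNNReal) (fun x hx y hy => ?_) htr⟩, hfBV⟩
  rw [edist_dist]
  exact ENNReal.ofReal_le_ofReal (Real.dist_le_of_mem_Icc hx hy)

theorem of_lipschitzWith [PseudoEMetricSpace E] {K : ℝ≥0} {f : ℝ → E} (hf : LipschitzWith K f)
    (a b : ℝ) : HolderBVOn 1 f (Icc a b) :=
  ⟨⟨K, hf.lipschitzOnWith.holderOnWith⟩,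
    by simpa using hf.locallyBoundedVariationOn univ a b trivial trivial⟩

theorem univ_of_support_subset [PseudoEMetricSpace E] [Zero E] {r : ℝ≥0} {f : ℝ → E} {a b : ℝ}
    (hab : a ≤ b) (hsupp : Function.support f ⊆ Ioo a b) (hf : HolderBVOn r f (Icc a b)) :
    HolderBVOn r f univ := by
  obtain ⟨⟨C, hHolder⟩, hBV⟩ := hf
  -- Clamping the argument to `[a, b]` does not change `f` and makes the hypotheses global.
  let clamp (x : ℝ) : ℝ := projIcc a b hab x
  have clamp_mem (x : ℝ) : clamp x ∈ Icc a b := (projIcc a b hab x).2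
  have lipschitz_clamp : LipschitzWith 1 clamp := LipschitzWith.projIcc hab
  have monotone_clamp : Monotone clamp := fun _ _ hxy => monotone_projIcc hab hxy
  rw [← comp_projIcc_eq_self hab hsupp]
  refine ⟨⟨C, holderOnWith_univ.2 ?_⟩, ?_⟩
  · simpa using! hHolder.comp_holderWith (holderWith_one.2 lipschitz_clamp) clamp_mem
  · exact ne_top_of_le_ne_top hBV (eVariationOn.comp_le_of_monotoneOn f clamp
      (monotone_clamp.monotoneOn _) fun x _ => clamp_mem x)

end HolderBVOn

theorem integrable_fourier_of_holderBVOn_univ [NormedAddCommGroup E]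
    [InnerProductSpace ℂ E] [CompleteSpace E] {f : ℝ → E} {r : ℝ≥0} (hf : Integrable f)
    (hf2 : MemLp f 2) (hr : 0 < r) (hreg : HolderBVOn r f univ) : Integrable (𝓕 f) := by
  obtain ⟨⟨C, hHolderOn⟩, hBV⟩ := hreg
  have hHolder : HolderWith C r f := holderOnWith_univ.1 hHolderOn
  refine integrable_fourier_of_lintegral_translate_sub_sq_le (C := C * eVariationOn f univ)
    (q := r + 1) hf hf2 (ENNReal.mul_ne_top ENNReal.coe_ne_top hBV) (by simpa using hr)
    fun h hh => ?_
  have holder_translate (x : ℝ) : edist (f (x + h)) (f x) ≤ C * ENNReal.ofReal (h ^ (r : ℝ)) := by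
    simpa [edist_dist, abs_of_pos hh.1, ENNReal.ofReal_rpow_of_pos hh.1]
      using hHolder.edist_le (x + h) x
  calc ∫⁻ x, ‖f (x + h) - f x‖ₑ ^ 2
      ≤ ∫⁻ x, C * ENNReal.ofReal (h ^ (r : ℝ)) * edist (f (x + h)) (f x) := by
        refine lintegral_mono fun x => ?_
        rw [← edist_eq_enorm_sub, sq]
        gcongr
        exact holder_translate x
    _ = C * ENNReal.ofReal (h ^ (r : ℝ)) * ∫⁻ x, edist (f (x + h)) (f x) :=
        lintegral_const_mul' _ _ (by finiteness)
    _ ≤ C * ENNReal.ofReal (h ^ (r : ℝ)) * (ENNReal.ofReal h * eVariationOn f univ) := by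
        gcongr
        exact lintegral_edist_translate_le_mul_eVariationOn
          (hHolder.continuous hr).stronglyMeasurable hh.1
    _ = C * eVariationOn f univ * ENNReal.ofReal (h ^ ((r : ℝ) + 1)) := by
        rw [Real.rpow_add_one hh.1.ne', ENNReal.ofReal_mul (Real.rpow_nonneg hh.1.le _)]
        ring

theorem integrable_fourier_of_holderBVOn [NormedAddCommGroup E] [InnerProductSpace ℂ E]
    [CompleteSpace E] {f : ℝ → E} {r : ℝ≥0} (hr : 0 < r) (hsupp : HasCompactSupport f)
    (hf : ∀ a b, HolderBVOn r f (Icc a b)) : Integrable (𝓕 f) := by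
  obtain ⟨R, hR, hball⟩ := hsupp.isCompact.isBounded.subset_ball_lt 0 0
  have support_subset : Function.support f ⊆ Ioo (-R) R := by
    simpa [Real.ball_eq_Ioo] using (subset_tsupport f).trans hball
  have hreg : HolderBVOn r f univ :=
    (hf (-R) R).univ_of_support_subset (by linarith) support_subset
  obtain ⟨C, hHolder⟩ := hreg.1
  have hcont : Continuous f := (holderOnWith_univ.1 hHolder).continuous hr
  exact integrable_fourier_of_holderBVOn_univ (hcont.integrable_of_hasCompactSupport hsupp)
    (hcont.memLp_of_hasCompactSupport hsupp) hr hreg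

end Zygmund

section SquareRoot

theorem sq_sqrt_eq_self (z : ℂ) : z.sqrt ^ 2 = z := Complex.cpow_ofNat_inv_pow z 2

theorem re_sqrt_eq (z : ℂ) : z.sqrt.re = √((‖z‖ + z.re) / 2) := Complex.cpow_inv_two_re z

theorem im_sqrt_eq {z : ℂ} (hz : 0 ≤ z.im) : z.sqrt.im = √((‖z‖ - z.re) / 2) :=
  Complex.cpow_inv_two_im_eq_sqrt hz

theorem re_sqrt_pos {z : ℂ} (hz : z.im ≠ 0) : 0 < z.sqrt.re := by
  rw [re_sqrt_eq, Real.sqrt_pos]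
  linarith [(abs_lt.1 (Complex.abs_re_lt_norm.2 hz)).1]

theorem im_sqrt_pos {z : ℂ} (hz : 0 < z.im) : 0 < z.sqrt.im := by
  rw [im_sqrt_eq hz.le, Real.sqrt_pos]
  linarith [(abs_lt.1 (Complex.abs_re_lt_norm.2 hz.ne')).2]

theorem dist_sq_le_dist_sq_sq_of_re_im_nonneg {a b : ℂ} (ha : 0 ≤ a.re ∧ 0 ≤ a.im)
    (hb : 0 ≤ b.re ∧ 0 ≤ b.im) : dist a b ^ 2 ≤ dist (a ^ 2) (b ^ 2) := by
  have norm_sub_le_norm_add : ‖a - b‖ ≤ ‖a + b‖ := by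
    rw [← sq_le_sq₀ (norm_nonneg _) (norm_nonneg _), Complex.sq_norm, Complex.sq_norm,
      Complex.normSq_apply, Complex.normSq_apply]
    simp only [Complex.sub_re, Complex.sub_im, Complex.add_re, Complex.add_im]
    nlinarith [mul_nonneg ha.1 hb.1, mul_nonneg ha.2 hb.2]
  calc dist a b ^ 2 = ‖a - b‖ * ‖a - b‖ := by rw [dist_eq_norm, sq]
    _ ≤ ‖a + b‖ * ‖a - b‖ := by gcongr
    _ = dist (a ^ 2) (b ^ 2) := by rw [dist_eq_norm, ← norm_mul, sq_sub_sq]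

theorem holderOnWith_sqrt : HolderOnWith 1 (1 / 2) Complex.sqrt {z | 0 ≤ z.im} := by
  intro z hz w hw
  have first_quadrant {u : ℂ} (hu : 0 ≤ u.im) : 0 ≤ u.sqrt.re ∧ 0 ≤ u.sqrt.im := by
    rw [re_sqrt_eq, im_sqrt_eq hu]
    exact ⟨Real.sqrt_nonneg _, Real.sqrt_nonneg _⟩
  have dist_le : dist z.sqrt w.sqrt ≤ dist z w ^ (1 / 2 : ℝ) := by
    rw [← Real.sqrt_eq_rpow]
    refine Real.le_sqrt_of_sq_le ?_
    simpa only [sq_sqrt_eq_self] using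
      dist_sq_le_dist_sq_sq_of_re_im_nonneg (first_quadrant hz) (first_quadrant hw)
  rw [edist_dist, edist_dist, ENNReal.coe_one, one_mul,
    ENNReal.ofReal_rpow_of_nonneg dist_nonneg (by positivity)]
  exact ENNReal.ofReal_le_ofReal (by simpa using dist_le)

theorem abs_norm_ofReal_add_sub_norm_le (z : ℂ) {u v : ℝ} (huv : u ≤ v) :
    |‖(v : ℂ) + z‖ - ‖(u : ℂ) + z‖| ≤ v - u := by
  simpa [← Complex.ofReal_sub, abs_of_nonneg (sub_nonneg.2 huv)] using
    abs_norm_sub_norm_le ((v : ℂ) + z) ((u : ℂ) + z)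

theorem monotone_re_sqrt_ofReal_add (z : ℂ) : Monotone fun u : ℝ => ((u : ℂ) + z).sqrt.re := by
  intro u v huv
  simp only [re_sqrt_eq, Complex.add_re, Complex.ofReal_re]
  gcongr √(?_ / 2)
  linarith [(abs_le.1 (abs_norm_ofReal_add_sub_norm_le z huv)).1]

theorem antitone_im_sqrt_ofReal_add {z : ℂ} (hz : 0 ≤ z.im) :
    Antitone fun u : ℝ => ((u : ℂ) + z).sqrt.im := by
  intro u v huv
  have im_nonneg (t : ℝ) : 0 ≤ ((t : ℂ) + z).im := by simpa using hz
  simp only [im_sqrt_eq (im_nonneg _), Complex.add_re, Complex.ofReal_re]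
  gcongr √(?_ / 2)
  linarith [(abs_le.1 (abs_norm_ofReal_add_sub_norm_le z huv)).2]

theorem boundedVariationOn_sqrt_ofReal_add {z : ℂ} (hz : 0 ≤ z.im) (a b : ℝ) :
    BoundedVariationOn (fun u : ℝ => ((u : ℂ) + z).sqrt) (Icc a b) := by
  have bv_of_monotone {g : ℝ → ℝ} (hg : Monotone g) : BoundedVariationOn g (Icc a b) := by
    simpa using (hg.monotoneOn univ).locallyBoundedVariationOn a b trivial trivial
  refine boundedVariationOn_of_re_of_im (bv_of_monotone (monotone_re_sqrt_ofReal_add z)) ?_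
  simpa [Function.comp_def] using (LipschitzWith.id (α := ℝ)).neg.comp_boundedVariationOn
    (bv_of_monotone (antitone_im_sqrt_ofReal_add hz).neg)

theorem holderBVOn_sqrt_ofReal_add {z : ℂ} (hz : 0 ≤ z.im) (a b : ℝ) :
    HolderBVOn (1 / 2) (fun u : ℝ => ((u : ℂ) + z).sqrt) (Icc a b) := by
  have lipschitz_shift : LipschitzWith 1 fun u : ℝ => (u : ℂ) + z :=
    LipschitzWith.of_edist_le fun u v => by
      simp [Complex.isometry_ofReal.edist_eq u v]
  have holder := holderOnWith_sqrt.comp_holderWith (holderWith_one.2 lipschitz_shift)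
    fun u => by simpa using hz
  exact ⟨⟨1, by simpa using! holder.holderOnWith _⟩, boundedVariationOn_sqrt_ofReal_add hz a b⟩

theorem sqrt_ofReal_of_nonneg {a : ℝ} (ha : 0 ≤ a) : (a : ℂ).sqrt = √a :=
  Complex.sqrt_of_nonneg (Complex.zero_le_real.2 ha)

theorem sqrt_ofReal_of_nonpos {a : ℝ} (ha : a ≤ 0) : (a : ℂ).sqrt = Complex.I * √(-a) := by
  rw [← sqrt_ofReal_of_nonneg (neg_nonneg.2 ha),
    ← Complex.sqrt_neg_of_nonneg (Complex.zero_le_real.2 (neg_nonneg.2 ha)),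
    Complex.ofReal_neg, neg_neg]

theorem kCl_ofReal_eq_sqrt_mul_sqrt {m : ℝ} (hm : 0 ≤ m) (ω : ℝ) :
    kCl m ω = ((ω : ℂ) - m).sqrt * ((ω : ℂ) + m).sqrt := by
  rw [← Complex.ofReal_sub, ← Complex.ofReal_add]
  simp only [kCl, Complex.ofReal_im, Complex.ofReal_re, lt_irrefl, if_false]
  split_ifs with hright hleft
  · rw [sqrt_ofReal_of_nonneg (by linarith), sqrt_ofReal_of_nonneg (by linarith),
      ← Complex.ofReal_mul, ← Real.sqrt_mul (by linarith)]
    ring_nf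
  · rw [sqrt_ofReal_of_nonpos (by linarith), sqrt_ofReal_of_nonpos (by linarith),
      mul_mul_mul_comm, Complex.I_mul_I, neg_one_mul, ← Complex.ofReal_mul,
      ← Real.sqrt_mul (by linarith)]
    ring_nf
  · rw [sqrt_ofReal_of_nonpos (by linarith), sqrt_ofReal_of_nonneg (by linarith), mul_assoc,
      ← Complex.ofReal_mul, ← Real.sqrt_mul (by linarith)]
    ring_nf

theorem kCl_eq_sqrt_mul_sqrt {m : ℝ} (hm : 0 ≤ m) {z : ℂ} (hz : 0 ≤ z.im) :
    kCl m z = (z - m).sqrt * (z + m).sqrt := by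
  rcases hz.lt_or_eq with him | him
  · have sq_eq : kCl m z ^ 2 = ((z - m).sqrt * (z + m).sqrt) ^ 2 := by
      rw [kCl, if_pos him, one_div, mul_pow, mul_pow, Complex.cpow_ofNat_inv_pow,
        sq_sqrt_eq_self, sq_sqrt_eq_self, Complex.I_sq]
      ring
    refine (sq_eq_sq_iff_eq_or_eq_neg.1 sq_eq).resolve_right fun h_neg => ?_
    have im_kCl : 0 ≤ (kCl m z).im := by
      rw [kCl, if_pos him, one_div, Complex.I_mul_im, Complex.cpow_inv_two_re]
      exact Real.sqrt_nonneg _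
    have im_sub : 0 < (z - m).im := by simpa using him
    have im_add : 0 < (z + m).im := by simpa using him
    have im_mul_pos : 0 < ((z - m).sqrt * (z + m).sqrt).im := by
      rw [Complex.mul_im]
      exact add_pos (mul_pos (re_sqrt_pos im_sub.ne') (im_sqrt_pos im_add))
        (mul_pos (im_sqrt_pos im_sub) (re_sqrt_pos im_add.ne'))
    rw [h_neg, Complex.neg_im] at im_kCl
    linarith
  · obtain ⟨ω, rfl⟩ : ∃ ω : ℝ, z = ω := ⟨z.re, Complex.ext rfl him.symm⟩
    exact kCl_ofReal_eq_sqrt_mul_sqrt hm ω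

end SquareRoot

section Symbol

theorem integrable_integral_mul_exp_of_integrable_fourier {F : ℝ → ℂ} (hF : Integrable (𝓕 F)) :
    Integrable fun t : ℝ => ∫ ω : ℝ, F ω * Complex.exp (-Complex.I * ω * t) := by
  refine (hF.comp_div (R := 2 * Real.pi) (by positivity)).congr (ae_of_all _ fun t => ?_)
  simp only [Real.fourier_eq', smul_eq_mul, RCLike.inner_apply, conj_trivial]
  congr 1 with ω
  push_cast
  rw [mul_comm]
  field_simp

theorem holderBVOn_exp_kCl_mul {m : ℝ} (hm : 0 ≤ m) {r : ℝ≥0} (hr : 0 < r) (hr2 : r ≤ 1 / 2)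
    {ζ : ℝ → ℂ} {a b : ℝ} (hζ : HolderBVOn r ζ (Icc a b)) (X : ℂ) {w : ℂ} (hw : 0 ≤ w.im) :
    HolderBVOn r (fun ω : ℝ => Complex.exp (Complex.I * kCl m (ω + w) * X) * ζ ω) (Icc a b) := by
  let Φ (p : (ℂ × ℂ) × ℂ) : ℂ := Complex.exp (Complex.I * (p.1.1 * p.1.2) * X) * p.2
  have hΦ : ContDiff ℝ 1 Φ := by fun_prop
  have factor (ω : ℝ) : kCl m (ω + w) = (ω + (w - m)).sqrt * (ω + (w + m)).sqrt := by
    rw [kCl_eq_sqrt_mul_sqrt hm (by simpa using hw), add_sub_assoc, add_assoc]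
  have hsub := (holderBVOn_sqrt_ofReal_add (z := w - m) (by simpa using hw) a b).of_le hr2
  have hadd := (holderBVOn_sqrt_ofReal_add (z := w + m) (by simpa using hw) a b).of_le hr2
  simpa only [Φ, factor] using ((hsub.prodMk hadd).prodMk hζ).contDiff_comp hΦ hr isCompact_Icc

end Symbol

theorem multiplicator_L1_general {m : ℝ} (hm : 0 ≤ m) {r : ℝ≥0} (hr : 0 < r) {ζ : ℝ → ℂ}
    (hζ : ∀ a b, HolderBVOn r ζ (Icc a b)) (hζsupp : HasCompactSupport ζ) (X : ℂ) {ε : ℝ}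
    (hε : 0 ≤ ε) :
    Integrable (fun t : ℝ => ((1 / (2 * Real.pi) : ℝ) : ℂ)
      * ∫ ω : ℝ, Complex.exp (Complex.I * kCl m ((ω : ℂ) + Complex.I * (ε : ℂ)) * X)
          * ζ ω * Complex.exp (-Complex.I * (ω : ℂ) * (t : ℂ))) := by
  have hε_im : 0 ≤ (Complex.I * (ε : ℂ)).im := by simpa using hε
  have hr_pos : 0 < min r (1 / 2) := lt_min hr (by norm_num)
  have symbol_regular (a b : ℝ) := holderBVOn_exp_kCl_mul hm hr_pos (min_le_right r (1 / 2))
    ((hζ a b).of_le (min_le_left r (1 / 2))) X hε_im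
  exact (integrable_integral_mul_exp_of_integrable_fourier
    (integrable_fourier_of_holderBVOn hr_pos hζsupp.mul_left symbol_regular)).const_mul _

/-- for fixed `x ∈ ℝ`, `ε ≥ 0` and a cutoff `ζ ∈ C_c^∞(ℝ)`, the function
`t ↦ (1/2π)∫ e^{ik(ω+iε)|x|} ζ(ω) e^{−iωt} dω` is in `L¹(ℝ)`. -/
theorem multiplicator_L1
    (m : ℝ) (hm : 0 < m)
    (ζ : ℝ → ℂ) (hζ : ContDiff ℝ (⊤ : ℕ∞) ζ) (hζsupp : HasCompactSupport ζ)
    (x : ℝ) (ε : ℝ) (hε : 0 ≤ ε) :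
    Integrable (fun t : ℝ => ((1 / (2 * Real.pi) : ℝ) : ℂ)
      * ∫ ω : ℝ, Complex.exp (Complex.I * kCl m ((ω:ℂ) + Complex.I * (ε:ℂ))
            * ((|x| : ℝ) : ℂ))
          * ζ ω * Complex.exp (-Complex.I * (ω:ℂ) * (t:ℂ))) (volume : Measure ℝ) := by
  obtain ⟨K, hK⟩ := hζ.lipschitzWith_of_hasCompactSupport hζsupp (by simp)
  exact multiplicator_L1_general hm.le one_pos (.of_lipschitzWith hK) hζsupp _ hε
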